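/- arXiv:2404.19649 — 2 statements merged into one kernel-verified Lean document; each statement's English description precedes it below -/
import Mathlib

section
/- Let d ≥ 1, let K1, K2 : [0,∞) → [0,∞) be continuous functions satisfying K_i(t) ≤ c₁ e^{−c₂ t²} for some constants c₁, c₂ > 0 and normalized so that ∫_{ℝ^d} K_i(‖x‖) dx = 1 for i = 1, 2. Set μ₂(K1) := ∫_{ℝ^d} ‖x‖² K1(‖x‖) dx and let R be an invertible d×d real matrix. Then for all a, b ∈ ℝ^d, ∫_{ℝ^d} ∫_{ℝ^d} K1(‖Rw‖) K2(‖w − v‖) (a·w)(b·v) dv dw = (μ₂(K1)/(d·|det R|)) · aᵀ (RᵀR)^{−1} b. -/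
open Finset Matrix MeasureTheory

/-!
For fixed `w` the integral over `v` replaces `b · v` by `b · w`, because the kernel is even and its
odd first moment vanishes. The substitution `u = R w` then turns what is left into a second moment
of the radial kernel `K1 ‖u‖`. By invariance under reflections, `∫ K1 ‖u‖ (p · u)²` depends only on
`‖p‖`, and summing over an orthonormal basis gives `μ₂ ‖p‖² / d`; polarization yields the bilinear
form `μ₂ (p · q) / d`, to be evaluated at `p = R⁻ᵀ a` and `q = R⁻ᵀ b`.
-/

open Module (finrank)
open scoped RealInnerProductSpace

section General

theorem integral_eq_zero_of_odd {G F : Type*} [MeasurableSpace G] [AddGroup G] [MeasurableNeg G]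
    [NormedAddCommGroup F] [NormedSpace ℝ F] {μ : Measure G} [μ.IsNegInvariant] {f : G → F}
    (hf : f.Odd) : ∫ x, f x ∂μ = 0 := by
  have : IsAddTorsionFree F := .of_isTorsionFree ℝ F
  have h := integral_neg_eq_self f μ
  simp only [hf _, integral_neg] at h
  exact self_eq_neg.mp h.symm

theorem integral_even_sub_mul_addMonoidHom {G : Type*} [MeasurableSpace G] [AddCommGroup G]
    [MeasurableAdd G] [MeasurableNeg G] {μ : Measure G} [μ.IsAddLeftInvariant] [μ.IsNegInvariant]
    {k : G → ℝ} (hk : k.Even) (hint : Integrable k μ) (L : G →+ ℝ)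
    (hL : Integrable (fun x ↦ k x * L x) μ) (w : G) :
    ∫ v, k (w - v) * L v ∂μ = (∫ x, k x ∂μ) * L w := by
  have hodd : ∫ x, k x * L x ∂μ = 0 :=
    integral_eq_zero_of_odd fun x ↦ by rw [hk, map_neg, mul_neg]
  calc ∫ v, k (w - v) * L v ∂μ
      = ∫ x, k x * L (w - x) ∂μ := by
        simpa only [sub_sub_cancel] using
          integral_sub_left_eq_self (fun x ↦ k x * L (w - x)) μ w
    _ = ∫ x, (k x * L w - k x * L x) ∂μ := by simp only [map_sub, mul_sub]
    _ = (∫ x, k x ∂μ) * L w := by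
        rw [integral_sub (hint.mul_const _) hL, hodd, sub_zero, integral_mul_const]

theorem integral_comp_linearMap {E F : Type*} [NormedAddCommGroup E] [NormedSpace ℝ E]
    [FiniteDimensional ℝ E] [MeasurableSpace E] [BorelSpace E] [NormedAddCommGroup F]
    [NormedSpace ℝ F] (μ : Measure E) [μ.IsAddHaarMeasure] {T : E →ₗ[ℝ] E}
    (hT : LinearMap.det T ≠ 0) (f : E → F) :
    ∫ x, f (T x) ∂μ = |LinearMap.det T|⁻¹ • ∫ x, f x ∂μ := by
  have hemb : MeasurableEmbedding T :=
    (T.equivOfDetNeZero hT).toContinuousLinearEquiv.toHomeomorph.measurableEmbedding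
  rw [← hemb.integral_map, Measure.map_linearMap_addHaar_eq_smul_addHaar μ hT,
    integral_smul_measure, ENNReal.toReal_ofReal (abs_nonneg _), abs_inv]

theorem integrable_mul_of_abs_le_mul {α : Type*} [MeasurableSpace α] {μ : Measure α}
    {k f g : α → ℝ} {C : ℝ} (hint : Integrable (fun x ↦ g x * k x) μ) (hf : AEMeasurable f μ)
    (hg : AEMeasurable g μ) (hfg : ∀ x, |f x| ≤ C * |g x|) :
    Integrable (fun x ↦ k x * f x) μ := by
  have hdiv (x : α) : f x = g x * (f x / g x) := by
    by_cases hx : g x = 0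
    · simpa [hx] using hfg x
    · field_simp
  have hbound (x : α) : ‖f x / g x‖ ≤ |C| := by
    rw [Real.norm_eq_abs, abs_div]
    exact div_le_of_le_mul₀ (abs_nonneg _) (abs_nonneg _)
      ((hfg x).trans (by gcongr; exact le_abs_self C))
  refine (hint.mul_bdd (hf.div hg).aestronglyMeasurable (.of_forall hbound)).congr
    (.of_forall fun x ↦ ?_)
  change g x * k x * (f x / g x) = k x * f x
  rw [mul_right_comm, ← hdiv, mul_comm]

theorem integrable_norm_pow_mul_radial_of_abs_le_gaussian {E : Type*} [NormedAddCommGroup E]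
    [NormedSpace ℝ E] [FiniteDimensional ℝ E] [Nontrivial E] [MeasurableSpace E] [BorelSpace E]
    (μ : Measure E) [μ.IsAddHaarMeasure] {K : ℝ → ℝ} (hK : Measurable K) {c₁ c₂ : ℝ} (hc₂ : 0 < c₂)
    (hbound : ∀ t, 0 ≤ t → |K t| ≤ c₁ * Real.exp (-c₂ * t ^ 2)) (n : ℕ) :
    Integrable (fun x : E ↦ ‖x‖ ^ n * K ‖x‖) μ := by
  refine (integrable_fun_norm_addHaar μ (f := fun t ↦ t ^ n * K t)).mpr ?_
  set m := finrank ℝ E - 1 + n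
  have hgauss : IntegrableOn (fun t : ℝ ↦ c₁ * (t ^ m * Real.exp (-c₂ * t ^ 2))) (Set.Ioi 0) := by
    simpa only [IntegrableOn, Real.rpow_natCast] using
      (integrableOn_rpow_mul_exp_neg_mul_sq hc₂
        (neg_one_lt_zero.trans_le m.cast_nonneg)).const_mul c₁
  refine hgauss.mono' (by fun_prop) ?_
  filter_upwards [ae_restrict_mem measurableSet_Ioi] with t ht
  have ht₀ : 0 ≤ t := (Set.mem_Ioi.mp ht).le
  calc ‖t ^ (finrank ℝ E - 1) • (t ^ n * K t)‖ = t ^ m * |K t| := by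
        rw [smul_eq_mul, ← mul_assoc, ← pow_add, norm_mul, Real.norm_of_nonneg (by positivity),
          Real.norm_eq_abs]
    _ ≤ t ^ m * (c₁ * Real.exp (-c₂ * t ^ 2)) := by gcongr; exact hbound t ht₀
    _ = c₁ * (t ^ m * Real.exp (-c₂ * t ^ 2)) := mul_left_comm _ _ _

end General

section InnerProductSpace

variable {E : Type*} [NormedAddCommGroup E] [InnerProductSpace ℝ E] [MeasurableSpace E]
  [BorelSpace E]

theorem integrable_mul_inner {μ : Measure E} {k : E → ℝ}
    (hk : Integrable (fun x ↦ ‖x‖ * k x) μ) (p : E) : Integrable (fun x ↦ k x * ⟪p, x⟫) μ :=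
  integrable_mul_of_abs_le_mul (C := ‖p‖) hk (by fun_prop) (by fun_prop) fun x ↦ by
    simpa only [abs_norm] using abs_real_inner_le_norm p x

theorem integrable_mul_inner_mul_inner {μ : Measure E} {k : E → ℝ}
    (hk : Integrable (fun x ↦ ‖x‖ ^ 2 * k x) μ) (p q : E) :
    Integrable (fun x ↦ k x * (⟪p, x⟫ * ⟪q, x⟫)) μ :=
  integrable_mul_of_abs_le_mul (C := ‖p‖ * ‖q‖) hk (by fun_prop) (by fun_prop) fun x ↦
    calc |⟪p, x⟫ * ⟪q, x⟫| = |⟪p, x⟫| * |⟪q, x⟫| := abs_mul _ _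
      _ ≤ (‖p‖ * ‖x‖) * (‖q‖ * ‖x‖) := by gcongr <;> exact abs_real_inner_le_norm _ _
      _ = ‖p‖ * ‖q‖ * |‖x‖ ^ 2| := by rw [abs_pow, abs_norm]; ring

theorem integrable_mul_inner_sq {μ : Measure E} {k : E → ℝ}
    (hk : Integrable (fun x ↦ ‖x‖ ^ 2 * k x) μ) (p : E) :
    Integrable (fun x ↦ k x * ⟪p, x⟫ ^ 2) μ := by
  simpa only [sq ⟪p, _⟫] using integrable_mul_inner_mul_inner hk p p

variable [FiniteDimensional ℝ E] {K : ℝ → ℝ}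

theorem integral_radial_sub_mul_inner (hK : Integrable fun x : E ↦ K ‖x‖)
    (hK' : Integrable fun x : E ↦ ‖x‖ * K ‖x‖) (b w : E) :
    ∫ v : E, K ‖w - v‖ * ⟪b, v⟫ = (∫ x : E, K ‖x‖) * ⟪b, w⟫ :=
  integral_even_sub_mul_addMonoidHom (k := fun x ↦ K ‖x‖) (fun x ↦ congrArg K (norm_neg x)) hK
    (innerₛₗ ℝ b).toAddMonoidHom (integrable_mul_inner hK' b) w

theorem integral_radial_mul_inner_sq_eq_of_norm_eq {p q : E} (hpq : ‖p‖ = ‖q‖) :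
    ∫ x : E, K ‖x‖ * ⟪p, x⟫ ^ 2 = ∫ x : E, K ‖x‖ * ⟪q, x⟫ ^ 2 := by
  set r := (ℝ ∙ (p - q))ᗮ.reflection
  have hr : r p = q := Submodule.reflection_sub hpq
  calc ∫ x : E, K ‖x‖ * ⟪p, x⟫ ^ 2 = ∫ x : E, K ‖r x‖ * ⟪q, r x⟫ ^ 2 := by
        simp only [← hr, r.norm_map, r.inner_map_map]
    _ = ∫ x : E, K ‖x‖ * ⟪q, x⟫ ^ 2 :=
        r.measurePreserving.integral_comp r.toHomeomorph.measurableEmbedding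
          fun x ↦ K ‖x‖ * ⟪q, x⟫ ^ 2

theorem finrank_mul_integral_radial_mul_inner_sq
    (hK : Integrable fun x : E ↦ ‖x‖ ^ 2 * K ‖x‖) (p : E) :
    finrank ℝ E * ∫ x : E, K ‖x‖ * ⟪p, x⟫ ^ 2 = ‖p‖ ^ 2 * ∫ x : E, ‖x‖ ^ 2 * K ‖x‖ := by
  let e := stdOrthonormalBasis ℝ E
  have hrotate (i) : ∫ x : E, K ‖x‖ * ⟪p, x⟫ ^ 2 = ‖p‖ ^ 2 * ∫ x : E, K ‖x‖ * ⟪e i, x⟫ ^ 2 := by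
    rw [integral_radial_mul_inner_sq_eq_of_norm_eq (q := ‖p‖ • e i) (by simp [norm_smul]),
      ← integral_const_mul]
    congr with x
    rw [real_inner_smul_left]
    ring
  calc finrank ℝ E * ∫ x : E, K ‖x‖ * ⟪p, x⟫ ^ 2
      = ∑ i, ‖p‖ ^ 2 * ∫ x : E, K ‖x‖ * ⟪e i, x⟫ ^ 2 := by simp [← hrotate]
    _ = ‖p‖ ^ 2 * ∫ x : E, ∑ i, K ‖x‖ * ⟪e i, x⟫ ^ 2 := by
        rw [← mul_sum, integral_finsetSum _ fun i _ ↦ integrable_mul_inner_sq hK (e i)]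
    _ = ‖p‖ ^ 2 * ∫ x : E, ‖x‖ ^ 2 * K ‖x‖ := by
        simp only [← mul_sum, e.sum_sq_inner_right, mul_comm]

theorem finrank_mul_integral_radial_mul_inner_mul_inner
    (hK : Integrable fun x : E ↦ ‖x‖ ^ 2 * K ‖x‖) (p q : E) :
    finrank ℝ E * ∫ x : E, K ‖x‖ * (⟪p, x⟫ * ⟪q, x⟫) =
      (∫ x : E, ‖x‖ ^ 2 * K ‖x‖) * ⟪p, q⟫ := by
  have hpolar : ∫ x : E, K ‖x‖ * (⟪p, x⟫ * ⟪q, x⟫) =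
      ((∫ x : E, K ‖x‖ * ⟪p + q, x⟫ ^ 2) - ∫ x : E, K ‖x‖ * ⟪p - q, x⟫ ^ 2) / 4 := by
    rw [← integral_sub (integrable_mul_inner_sq hK _) (integrable_mul_inner_sq hK _),
      ← integral_div]
    congr with x
    rw [inner_add_left, inner_sub_left]
    ring
  rw [hpolar, mul_div_assoc', mul_sub, finrank_mul_integral_radial_mul_inner_sq hK,
    finrank_mul_integral_radial_mul_inner_sq hK, norm_add_sq_real, norm_sub_sq_real]
  ring

-- The functionals are written `⟪p, T ·⟫` so that no inverse of `T` appears.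
theorem integral_integral_radial_comp_mul_inner_mul_inner [Nontrivial E] {K₁ K₂ : ℝ → ℝ}
    (hK₁ : Integrable fun x : E ↦ ‖x‖ ^ 2 * K₁ ‖x‖) (hK₂ : Integrable fun x : E ↦ K₂ ‖x‖)
    (hK₂' : Integrable fun x : E ↦ ‖x‖ * K₂ ‖x‖) {T : E →ₗ[ℝ] E} (hT : LinearMap.det T ≠ 0)
    (p q : E) :
    ∫ w : E, ∫ v : E, K₁ ‖T w‖ * K₂ ‖w - v‖ * (⟪p, T w⟫ * ⟪q, T v⟫) =
      (∫ x : E, K₂ ‖x‖) *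
        ((∫ x : E, ‖x‖ ^ 2 * K₁ ‖x‖) / (finrank ℝ E * |LinearMap.det T|) * ⟪p, q⟫) := by
  have hinner (w : E) : ∫ v : E, K₁ ‖T w‖ * K₂ ‖w - v‖ * (⟪p, T w⟫ * ⟪q, T v⟫) =
      (∫ x : E, K₂ ‖x‖) * (K₁ ‖T w‖ * (⟪p, T w⟫ * ⟪q, T w⟫)) := by
    calc ∫ v : E, K₁ ‖T w‖ * K₂ ‖w - v‖ * (⟪p, T w⟫ * ⟪q, T v⟫)
        = ∫ v : E, K₁ ‖T w‖ * ⟪p, T w⟫ * (K₂ ‖w - v‖ * ⟪q, T v⟫) := by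
          congr with v
          exact mul_mul_mul_comm _ _ _ _
      _ = K₁ ‖T w‖ * ⟪p, T w⟫ * ((∫ x : E, K₂ ‖x‖) * ⟪q, T w⟫) := by
          simp only [← T.adjoint_inner_left _ q, integral_const_mul,
            integral_radial_sub_mul_inner hK₂ hK₂']
      _ = (∫ x : E, K₂ ‖x‖) * (K₁ ‖T w‖ * (⟪p, T w⟫ * ⟪q, T w⟫)) := by ring
  have hmoment : ∫ x : E, K₁ ‖x‖ * (⟪p, x⟫ * ⟪q, x⟫) =
      (∫ x : E, ‖x‖ ^ 2 * K₁ ‖x‖) * ⟪p, q⟫ / finrank ℝ E :=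
    eq_div_of_mul_eq (by exact_mod_cast (Module.finrank_pos (R := ℝ) (M := E)).ne')
      (by rw [mul_comm, finrank_mul_integral_radial_mul_inner_mul_inner hK₁])
  simp only [hinner, integral_const_mul]
  rw [integral_comp_linearMap volume hT fun x ↦ K₁ ‖x‖ * (⟪p, x⟫ * ⟪q, x⟫), hmoment, smul_eq_mul]
  field_simp

end InnerProductSpace

section Coordinates

variable {ι : Type*} [Fintype ι]

theorem integral_euclideanSpace {F : Type*} [NormedAddCommGroup F] [NormedSpace ℝ F]
    (f : EuclideanSpace ℝ ι → F) : ∫ y, f y = ∫ x : ι → ℝ, f (WithLp.toLp 2 x) :=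
  ((PiLp.volume_preserving_toLp ι).integral_comp
    (MeasurableEquiv.toLp 2 (ι → ℝ)).measurableEmbedding f).symm

theorem integrable_euclideanSpace_iff {F : Type*} [NormedAddCommGroup F]
    {f : EuclideanSpace ℝ ι → F} :
    Integrable f ↔ Integrable fun x : ι → ℝ ↦ f (WithLp.toLp 2 x) :=
  ((PiLp.volume_preserving_toLp ι).integrable_comp_emb
    (MeasurableEquiv.toLp 2 (ι → ℝ)).measurableEmbedding).symm

theorem sq_sqrt_sum_sq (x : ι → ℝ) : √(∑ i, x i ^ 2) ^ 2 = ∑ i, x i ^ 2 :=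
  Real.sq_sqrt (sum_nonneg fun i _ ↦ sq_nonneg (x i))

theorem norm_toLp_two_eq_sqrt (x : ι → ℝ) : ‖WithLp.toLp 2 x‖ = √(∑ i, x i ^ 2) := by
  simp [EuclideanSpace.norm_eq]

theorem inner_toLp_two (x y : ι → ℝ) : ⟪WithLp.toLp 2 x, WithLp.toLp 2 y⟫ = x ⬝ᵥ y := by
  rw [EuclideanSpace.inner_toLp_toLp, star_trivial, dotProduct_comm]

theorem integrable_sqrt_sum_sq_pow_mul_of_abs_le_gaussian [Nonempty ι] {K : ℝ → ℝ}
    (hK : Measurable K) {c₁ c₂ : ℝ} (hc₂ : 0 < c₂)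
    (hbound : ∀ t, 0 ≤ t → |K t| ≤ c₁ * Real.exp (-c₂ * t ^ 2)) (n : ℕ) :
    Integrable fun x : ι → ℝ ↦ √(∑ i, x i ^ 2) ^ n * K √(∑ i, x i ^ 2) := by
  simpa only [integrable_euclideanSpace_iff, norm_toLp_two_eq_sqrt] using
    integrable_norm_pow_mul_radial_of_abs_le_gaussian (volume : Measure (EuclideanSpace ℝ ι))
      hK hc₂ hbound n

theorem inv_transpose_mulVec_dotProduct_mulVec {S : Type*} [CommRing S] [DecidableEq ι]
    {R : Matrix ι ι S} (hR : IsUnit R.det) (a w : ι → S) : (R⁻¹ᵀ *ᵥ a) ⬝ᵥ (R *ᵥ w) = a ⬝ᵥ w := by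
  rw [mulVec_transpose, ← dotProduct_mulVec, mulVec_mulVec, nonsing_inv_mul _ hR, one_mulVec]

theorem inv_transpose_mulVec_dotProduct_inv_transpose_mulVec {S : Type*} [CommRing S]
    [DecidableEq ι] (R : Matrix ι ι S) (a b : ι → S) :
    (R⁻¹ᵀ *ᵥ a) ⬝ᵥ (R⁻¹ᵀ *ᵥ b) = a ⬝ᵥ ((Rᵀ * R)⁻¹ *ᵥ b) := by
  rw [Matrix.mul_inv_rev, ← mulVec_mulVec, mulVec_transpose R⁻¹ a, ← dotProduct_mulVec,
    transpose_nonsing_inv]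

theorem composed_kernel_first_order_cross_moment_general [Nonempty ι] [DecidableEq ι]
    {K₁ K₂ : ℝ → ℝ}
    (hK₁ : Integrable fun x : ι → ℝ ↦ (∑ i, x i ^ 2) * K₁ √(∑ i, x i ^ 2))
    (hK₂ : Integrable fun x : ι → ℝ ↦ K₂ √(∑ i, x i ^ 2))
    (hK₂' : Integrable fun x : ι → ℝ ↦ √(∑ i, x i ^ 2) * K₂ √(∑ i, x i ^ 2))
    {R : Matrix ι ι ℝ} (hR : IsUnit R.det) (a b : ι → ℝ) :
    ∫ w : ι → ℝ, ∫ v : ι → ℝ, K₁ √(∑ i, (R *ᵥ w) i ^ 2) * K₂ √(∑ i, (w i - v i) ^ 2) *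
        ((∑ i, a i * w i) * ∑ i, b i * v i) =
      (∫ x : ι → ℝ, K₂ √(∑ i, x i ^ 2)) *
        ((∫ x : ι → ℝ, (∑ i, x i ^ 2) * K₁ √(∑ i, x i ^ 2)) / (Fintype.card ι * |R.det|) *
          (a ⬝ᵥ ((Rᵀ * R)⁻¹ *ᵥ b))) := by
  have hdet : LinearMap.det (R.toLpLin 2 2) = R.det := LinearMap.det_toLpLin 2 R
  have h := integral_integral_radial_comp_mul_inner_mul_inner (E := EuclideanSpace ℝ ι)
    (K₁ := K₁) (K₂ := K₂) (T := R.toLpLin 2 2)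
    (by simpa only [integrable_euclideanSpace_iff, norm_toLp_two_eq_sqrt, sq_sqrt_sum_sq]
      using hK₁)
    (by simpa only [integrable_euclideanSpace_iff, norm_toLp_two_eq_sqrt] using hK₂)
    (by simpa only [integrable_euclideanSpace_iff, norm_toLp_two_eq_sqrt] using hK₂')
    (hdet ▸ hR.ne_zero) (WithLp.toLp 2 (R⁻¹ᵀ *ᵥ a)) (WithLp.toLp 2 (R⁻¹ᵀ *ᵥ b))
  simpa only [integral_euclideanSpace, toLpLin_toLp, toLin'_apply, ← WithLp.toLp_sub,
    inner_toLp_two, norm_toLp_two_eq_sqrt, inv_transpose_mulVec_dotProduct_mulVec hR,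
    inv_transpose_mulVec_dotProduct_inv_transpose_mulVec, sq_sqrt_sum_sq, hdet,
    finrank_euclideanSpace] using! h

end Coordinates

/-- First-order cross-moment of the composed landmark alternating
diffusion kernel.  With `K1, K2 : [0,∞) → [0,∞)` continuous, bounded by Gaussians and
normalized so that `∫ Kᵢ(‖x‖) dx = 1`, `μ₂(K1) = ∫ ‖x‖² K1(‖x‖) dx`, and `R` an
invertible `d × d` real matrix, one has for all `a, b ∈ ℝ^d`:
`∫∫ K1(‖Rw‖) K2(‖w−v‖) (a·w)(b·v) dv dw = (μ₂(K1)/(d·|det R|)) · aᵀ (RᵀR)⁻¹ b`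
(Euclidean norms and inner products, Lebesgue measure). -/
theorem composed_kernel_first_order_cross_moment {d : ℕ} (hd : 1 ≤ d)
    (K1 K2 : ℝ → ℝ) (hK1c : Continuous K1) (hK2c : Continuous K2)
    (hK1nn : ∀ t, 0 ≤ t → 0 ≤ K1 t) (hK2nn : ∀ t, 0 ≤ t → 0 ≤ K2 t)
    (c1 c2 : ℝ) (hc1 : 0 < c1) (hc2 : 0 < c2)
    (hK1b : ∀ t, 0 ≤ t → K1 t ≤ c1 * Real.exp (-c2 * t ^ 2))
    (hK2b : ∀ t, 0 ≤ t → K2 t ≤ c1 * Real.exp (-c2 * t ^ 2))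
    (hK1norm : (∫ x : Fin d → ℝ, K1 (Real.sqrt (∑ i, x i ^ 2))) = 1)
    (hK2norm : (∫ x : Fin d → ℝ, K2 (Real.sqrt (∑ i, x i ^ 2))) = 1)
    (mu2K1 : ℝ)
    (hmu2K1 : mu2K1 = ∫ x : Fin d → ℝ, (∑ i, x i ^ 2) * K1 (Real.sqrt (∑ i, x i ^ 2)))
    (R : Matrix (Fin d) (Fin d) ℝ) (hR : IsUnit R.det) :
    ∀ a b : Fin d → ℝ,
      (∫ w : Fin d → ℝ, ∫ v : Fin d → ℝ,
          K1 (Real.sqrt (∑ i, (R.mulVec w i) ^ 2))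
            * K2 (Real.sqrt (∑ i, (w i - v i) ^ 2))
            * ((∑ i, a i * w i) * (∑ i, b i * v i)))
        = mu2K1 / (d * |R.det|) * (a ⬝ᵥ ((Rᵀ * R)⁻¹).mulVec b) := by
  have : Nonempty (Fin d) := Fin.pos_iff_nonempty.mp hd
  have hmoment₁ := integrable_sqrt_sum_sq_pow_mul_of_abs_le_gaussian (ι := Fin d) hK1c.measurable
    hc2 fun t ht ↦ (abs_of_nonneg (hK1nn t ht)).trans_le (hK1b t ht)
  have hmoment₂ := integrable_sqrt_sum_sq_pow_mul_of_abs_le_gaussian (ι := Fin d) hK2c.measurable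
    hc2 fun t ht ↦ (abs_of_nonneg (hK2nn t ht)).trans_le (hK2b t ht)
  intro a b
  rw [composed_kernel_first_order_cross_moment_general
      (by simpa only [sq_sqrt_sum_sq] using hmoment₁ 2)
      (by simpa only [pow_zero, one_mul] using hmoment₂ 0)
      (by simpa only [pow_one] using hmoment₂ 1) hR,
    hK2norm, ← hmu2K1, one_mul, Fintype.card_fin]
end

section
/- Let d ≥ 1, let K1, K2 : [0,∞) → [0,∞) be continuous functions satisfying K_i(t) ≤ c₁ e^{−c₂ t²} for some constants c₁, c₂ > 0 and normalized so that ∫_{ℝ^d} K_i(‖x‖) dx = 1 for i = 1, 2. Set μ₂(K_i) := ∫_{ℝ^d} ‖x‖² K_i(‖x‖) dx and let R be an invertible d×d real matrix. Then for every symmetric d×d real matrix H, ∫_{ℝ^d} ∫_{ℝ^d} K1(‖Rw‖) K2(‖w − v‖) (vᵀ H v) dv dw = (1/|det R|) · [ (μ₂(K1)/d)·tr((RᵀR)^{−1} H) + (μ₂(K2)/d)·tr(H) ]. -/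
open Finset Matrix MeasureTheory

/-!
Put `v = w - s` in the inner integral. The cross terms of `(w - s)ᵀ H (w - s)` are odd in `s`, so
they vanish against an even kernel, and what remains is `wᵀ H w` times the mass of `K2` plus the
pairing of `H` with the second moment matrix `∫ s sᵀ K2(‖s‖) ds`. Put `u = R w` in the outer
integral: `wᵀ H w` becomes `uᵀ (R⁻ᵀ H R⁻¹) u`, again paired with a second moment matrix. For a
radial kernel, reflecting one coordinate kills the off-diagonal second moments and swapping two
coordinates equates the diagonal ones, so the second moment matrix is `(μ₂ / d) • 1`.
-/

section Moments

variable {ι : Type*} [Fintype ι] {k : (ι → ℝ) → ℝ}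

/-- The kernel `x ↦ K(‖x‖)` with radial profile `K`. The Euclidean norm is written out because the
norm of `ι → ℝ` is the sup norm. -/
noncomputable def radialKernel (K : ℝ → ℝ) (x : ι → ℝ) : ℝ :=
  K (Real.sqrt (∑ i, x i ^ 2))

/-- The scalar second moment `μ₂(k) = ∫ ‖x‖² k(x) dx`. -/
noncomputable def secondMoment (k : (ι → ℝ) → ℝ) : ℝ :=
  ∫ x, (∑ i, x i ^ 2) * k x

/-- The matrix `∫ x xᵀ k(x) dx` of second moments of a kernel `k`, not centred and not divided by
the mass of `k`. -/
noncomputable def secondMomentMatrix (k : (ι → ℝ) → ℝ) : Matrix ι ι ℝ :=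
  .of fun i j => ∫ x, x i * x j * k x

/-- All moments of `k` of order at most two converge absolutely. Orders zero and two
control order one, as `|x i| ≤ 1 + ‖x‖²`. -/
structure HasFiniteSecondMoment (k : (ι → ℝ) → ℝ) : Prop where
  integrable : Integrable k
  integrable_sum_sq_mul : Integrable fun x => (∑ i, x i ^ 2) * k x

theorem sq_apply_le_sum_sq (x : ι → ℝ) (i : ι) : x i ^ 2 ≤ ∑ j, x j ^ 2 :=
  single_le_sum (f := fun j => x j ^ 2) (fun j _ => sq_nonneg (x j)) (mem_univ i)

theorem dotProduct_mulVec_mul_eq_sum (M : Matrix ι ι ℝ) (x : ι → ℝ) (a : ℝ) :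
    x ⬝ᵥ M *ᵥ x * a = ∑ i, ∑ j, M i j * (x j * x i * a) := by
  simp only [dotProduct, mulVec, sum_mul, mul_sum]
  exact sum_congr rfl fun i _ => sum_congr rfl fun j _ => by ring

namespace HasFiniteSecondMoment

theorem integrable_mul_of_abs_le (hk : HasFiniteSecondMoment k) {p : (ι → ℝ) → ℝ}
    (hp : AEStronglyMeasurable p) (hle : ∀ x, |p x| ≤ 1 + ∑ i, x i ^ 2) :
    Integrable fun x => p x * k x := by
  refine (hk.integrable.add hk.integrable_sum_sq_mul).mono (hp.mul hk.integrable.1) (.of_forall ?_)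
  intro x
  have hfactor : k x + (∑ i, x i ^ 2) * k x = (1 + ∑ i, x i ^ 2) * k x := by ring
  simp only [Pi.add_apply, hfactor, norm_mul, Real.norm_eq_abs]
  exact mul_le_mul_of_nonneg_right ((hle x).trans (le_abs_self _)) (abs_nonneg _)

theorem integrable_apply_mul (hk : HasFiniteSecondMoment k) (i : ι) :
    Integrable fun x => x i * k x := by
  refine hk.integrable_mul_of_abs_le (measurable_pi_apply i).aestronglyMeasurable fun x => ?_
  nlinarith [sq_apply_le_sum_sq x i, sq_abs (x i), sq_nonneg (|x i| - 1)]

theorem integrable_apply_mul_apply_mul (hk : HasFiniteSecondMoment k) (i j : ι) :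
    Integrable fun x => x i * x j * k x := by
  refine hk.integrable_mul_of_abs_le (by fun_prop) fun x => ?_
  rw [abs_mul]
  nlinarith [sq_apply_le_sum_sq x i, sq_apply_le_sum_sq x j, sq_abs (x i), sq_abs (x j),
    sq_nonneg (|x i| - |x j|)]

theorem integrable_dotProduct_mul (hk : HasFiniteSecondMoment k) (b : ι → ℝ) :
    Integrable fun x => b ⬝ᵥ x * k x := by
  simp only [dotProduct, sum_mul, mul_assoc]
  exact integrable_finsetSum _ fun i _ => (hk.integrable_apply_mul i).const_mul _

theorem integrable_dotProduct_mulVec_mul (hk : HasFiniteSecondMoment k) (M : Matrix ι ι ℝ) :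
    Integrable fun x => x ⬝ᵥ M *ᵥ x * k x := by
  simp only [dotProduct_mulVec_mul_eq_sum]
  exact integrable_finsetSum _ fun i _ => integrable_finsetSum _ fun j _ =>
    (hk.integrable_apply_mul_apply_mul j i).const_mul _

theorem integral_dotProduct_mulVec_mul (hk : HasFiniteSecondMoment k) (M : Matrix ι ι ℝ) :
    ∫ x, x ⬝ᵥ M *ᵥ x * k x = (M * secondMomentMatrix k).trace := by
  have hint (i j : ι) : Integrable fun x : ι → ℝ => M i j * (x j * x i * k x) :=
    (hk.integrable_apply_mul_apply_mul j i).const_mul _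
  simp only [dotProduct_mulVec_mul_eq_sum, trace, diag_apply, mul_apply, secondMomentMatrix,
    of_apply]
  rw [integral_finsetSum _ fun i _ => integrable_finsetSum _ fun j _ => hint i j]
  refine sum_congr rfl fun i _ => ?_
  simp only [integral_finsetSum _ fun j _ => hint i j, integral_const_mul]

theorem trace_secondMomentMatrix (hk : HasFiniteSecondMoment k) :
    (secondMomentMatrix k).trace = secondMoment k := by
  classical
  rw [← one_mul (secondMomentMatrix k), ← hk.integral_dotProduct_mulVec_mul 1]
  simp only [one_mulVec, dotProduct, ← sq, secondMoment]

end HasFiniteSecondMoment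

theorem integral_dotProduct_mul_eq_zero_of_even (hk : k.Even) (b : ι → ℝ) :
    ∫ x, b ⬝ᵥ x * k x = 0 := by
  have h := integral_neg_eq_self (fun x => b ⬝ᵥ x * k x) volume
  simp only [hk _, dotProduct_neg, neg_mul, integral_neg] at h
  linarith

theorem integral_comp_sub_mul_dotProduct_mulVec (hk : HasFiniteSecondMoment k) (hk_even : k.Even)
    (H : Matrix ι ι ℝ) (w : ι → ℝ) :
    ∫ v, k (w - v) * (v ⬝ᵥ H *ᵥ v) =
      (w ⬝ᵥ H *ᵥ w) * (∫ x, k x) + (H * secondMomentMatrix k).trace := by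
  have hexpand (s : ι → ℝ) :
      k (w - (w - s)) * ((w - s) ⬝ᵥ H *ᵥ (w - s)) =
        (w ⬝ᵥ H *ᵥ w) * k s - (H *ᵥ w + w ᵥ* H) ⬝ᵥ s * k s + s ⬝ᵥ H *ᵥ s * k s := by
    simp only [sub_sub_cancel, mulVec_sub, dotProduct_sub, sub_dotProduct, add_dotProduct,
      ← dotProduct_mulVec]
    rw [dotProduct_comm (H *ᵥ w) s]
    ring
  have hconst := hk.integrable.const_mul (w ⬝ᵥ H *ᵥ w)
  have hlinear := hk.integrable_dotProduct_mul (H *ᵥ w + w ᵥ* H)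
  have hquadratic := hk.integrable_dotProduct_mulVec_mul H
  rw [← integral_sub_left_eq_self _ volume w]
  simp only [hexpand]
  rw [integral_add (hconst.sub' hlinear) hquadratic, integral_sub hconst hlinear,
    integral_const_mul, integral_dotProduct_mul_eq_zero_of_even hk_even,
    hk.integral_dotProduct_mulVec_mul, sub_zero]

end Moments

section ChangeOfVariables

variable {ι E : Type*} [Fintype ι] [NormedAddCommGroup E] [NormedSpace ℝ E]

theorem integral_comp_mulVec [DecidableEq ι] {R : Matrix ι ι ℝ} (hR : IsUnit R.det)
    (F : (ι → ℝ) → E) :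
    ∫ w, F (R *ᵥ w) = |R.det|⁻¹ • ∫ u, F u := by
  have hinj : Function.Injective (toLin' R) :=
    mulVec_injective_of_isUnit ((isUnit_iff_isUnit_det R).2 hR)
  have hemb : MeasurableEmbedding (toLin' R) :=
    (LinearMap.continuous_of_finiteDimensional _).measurableEmbedding hinj
  calc ∫ w, F (R *ᵥ w) = ∫ u, F u ∂(volume.map (toLin' R)) := (hemb.integral_map F).symm
    _ = |R.det|⁻¹ • ∫ u, F u := by
      rw [Real.map_matrix_volume_pi_eq_smul_volume_pi hR.ne_zero, integral_smul_measure,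
        ENNReal.toReal_ofReal (abs_nonneg _), abs_inv]

theorem integral_comp_update_neg [DecidableEq ι] (i : ι) (F : (ι → ℝ) → E) :
    ∫ x, F (Function.update x i (-x i)) = ∫ x, F x := by
  have hdet : (diagonal (Function.update 1 i (-1)) : Matrix ι ι ℝ).det = -1 := by
    simp [det_diagonal, prod_update_of_mem]
  have hreflect (x : ι → ℝ) :
      diagonal (Function.update 1 i (-1)) *ᵥ x = Function.update x i (-x i) := by
    ext j
    by_cases h : j = i <;> simp [mulVec_diagonal, h]
  simpa [hdet, hreflect] using integral_comp_mulVec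
    (R := diagonal (Function.update 1 i (-1))) (by simp [hdet]) F

theorem integral_comp_perm (σ : Equiv.Perm ι) (F : (ι → ℝ) → E) :
    ∫ x, F (x ∘ σ) = ∫ x, F x := by
  classical
  have hdet : |(σ.permMatrix ℝ).det| = 1 := by
    rcases Int.units_eq_one_or σ.sign with h | h <;> simp [det_permutation, h]
  simpa only [hdet, permMatrix_mulVec, inv_one, one_smul] using
    integral_comp_mulVec (R := σ.permMatrix ℝ) (by simp [det_permutation]) F

variable [DecidableEq ι] {R : Matrix ι ι ℝ}

theorem mulVec_dotProduct_inv_conj_mulVec (H : Matrix ι ι ℝ) (hR : IsUnit R.det) (w : ι → ℝ) :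
    (R *ᵥ w) ⬝ᵥ (R⁻¹ᵀ * H * R⁻¹) *ᵥ (R *ᵥ w) = w ⬝ᵥ H *ᵥ w := by
  rw [mulVec_mulVec, nonsing_inv_mul_cancel_right _ _ hR, ← mulVec_mulVec,
    dotProduct_mulVec (R *ᵥ w), vecMul_transpose, mulVec_mulVec, nonsing_inv_mul _ hR, one_mulVec]

theorem integral_integral_comp_mulVec_mul_dotProduct_mulVec {k₁ k₂ : (ι → ℝ) → ℝ}
    (hk₁ : HasFiniteSecondMoment k₁) (hk₂ : HasFiniteSecondMoment k₂) (hk₂_even : k₂.Even)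
    (hR : IsUnit R.det) (H : Matrix ι ι ℝ) :
    ∫ w, ∫ v, k₁ (R *ᵥ w) * k₂ (w - v) * (v ⬝ᵥ H *ᵥ v) =
      |R.det|⁻¹ * ((R⁻¹ᵀ * H * R⁻¹ * secondMomentMatrix k₁).trace * (∫ x, k₂ x) +
        (H * secondMomentMatrix k₂).trace * ∫ x, k₁ x) := by
  set M := R⁻¹ᵀ * H * R⁻¹
  set m := ∫ x, k₂ x
  set c := (H * secondMomentMatrix k₂).trace
  have hinner (w : ι → ℝ) :
      ∫ v, k₁ (R *ᵥ w) * k₂ (w - v) * (v ⬝ᵥ H *ᵥ v) =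
        (R *ᵥ w) ⬝ᵥ M *ᵥ (R *ᵥ w) * k₁ (R *ᵥ w) * m + c * k₁ (R *ᵥ w) := by
    simp only [mul_assoc, integral_const_mul]
    rw [integral_comp_sub_mul_dotProduct_mulVec hk₂ hk₂_even,
      ← mulVec_dotProduct_inv_conj_mulVec H hR]
    ring
  calc ∫ w, ∫ v, k₁ (R *ᵥ w) * k₂ (w - v) * (v ⬝ᵥ H *ᵥ v)
      = |R.det|⁻¹ * ∫ u, (u ⬝ᵥ M *ᵥ u * k₁ u * m + c * k₁ u) := by
        simp only [hinner]
        exact integral_comp_mulVec hR fun u => u ⬝ᵥ M *ᵥ u * k₁ u * m + c * k₁ u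
    _ = |R.det|⁻¹ * ((M * secondMomentMatrix k₁).trace * m + c * ∫ x, k₁ x) := by
        rw [integral_add ((hk₁.integrable_dotProduct_mulVec_mul M).mul_const m)
            (hk₁.integrable.const_mul c), integral_mul_const, integral_const_mul,
          hk₁.integral_dotProduct_mulVec_mul]

end ChangeOfVariables

section GaussianDecay

variable {ι : Type*} [Fintype ι]

theorem integrable_exp_neg_mul_sum_sq {b : ℝ} (hb : 0 < b) :
    Integrable fun x : ι → ℝ => Real.exp (-b * ∑ i, x i ^ 2) := by
  simp only [mul_sum, Real.exp_sum]
  exact Integrable.fintype_prod (f := fun _ t => Real.exp (-b * t ^ 2))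
    fun _ => integrable_exp_neg_mul_sq hb

theorem mul_exp_neg_mul_le {b : ℝ} (hb : 0 < b) (s : ℝ) :
    s * Real.exp (-b * s) ≤ 2 / b * Real.exp (-(b / 2) * s) := by
  have hs : s ≤ 2 / b * Real.exp (b / 2 * s) := by
    rw [← div_le_iff₀' (by positivity)]
    calc s / (2 / b) = b / 2 * s := by field_simp
      _ ≤ Real.exp (b / 2 * s) := by linarith [Real.add_one_le_exp (b / 2 * s)]
  calc s * Real.exp (-b * s) ≤ 2 / b * Real.exp (b / 2 * s) * Real.exp (-b * s) := by gcongr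
    _ = 2 / b * Real.exp (-(b / 2) * s) := by rw [mul_assoc, ← Real.exp_add]; ring_nf

theorem hasFiniteSecondMoment_of_abs_le_exp {k : (ι → ℝ) → ℝ} (hk : AEStronglyMeasurable k)
    {C b : ℝ} (hb : 0 < b) (hle : ∀ x, |k x| ≤ C * Real.exp (-b * ∑ i, x i ^ 2)) :
    HasFiniteSecondMoment k where
  integrable := ((integrable_exp_neg_mul_sum_sq hb).const_mul C).mono' hk (.of_forall hle)
  integrable_sum_sq_mul := by
    have hC : 0 ≤ C := by simpa using (abs_nonneg _).trans (hle 0)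
    refine ((integrable_exp_neg_mul_sum_sq (half_pos hb)).const_mul (C * (2 / b))).mono'
      (AEStronglyMeasurable.mul (Continuous.aestronglyMeasurable (by fun_prop)) hk)
      (.of_forall fun x => ?_)
    have hs : 0 ≤ ∑ i, x i ^ 2 := sum_nonneg fun i _ => sq_nonneg (x i)
    calc ‖(∑ i, x i ^ 2) * k x‖ = (∑ i, x i ^ 2) * |k x| := by
          rw [norm_mul, Real.norm_of_nonneg hs, Real.norm_eq_abs]
      _ ≤ (∑ i, x i ^ 2) * (C * Real.exp (-b * ∑ i, x i ^ 2)) := by gcongr; exact hle x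
      _ = C * ((∑ i, x i ^ 2) * Real.exp (-b * ∑ i, x i ^ 2)) := by ring
      _ ≤ C * (2 / b * Real.exp (-(b / 2) * ∑ i, x i ^ 2)) := by
          gcongr C * ?_
          exact mul_exp_neg_mul_le hb _
      _ = C * (2 / b) * Real.exp (-(b / 2) * ∑ i, x i ^ 2) := by ring

theorem hasFiniteSecondMoment_radialKernel {K : ℝ → ℝ} (hK : Measurable K) {C b : ℝ} (hb : 0 < b)
    (hle : ∀ t, 0 ≤ t → |K t| ≤ C * Real.exp (-b * t ^ 2)) :
    HasFiniteSecondMoment (radialKernel K : (ι → ℝ) → ℝ) := by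
  refine hasFiniteSecondMoment_of_abs_le_exp (C := C)
    (hK.comp (by fun_prop)).aestronglyMeasurable hb fun x => ?_
  have hs : 0 ≤ ∑ i, x i ^ 2 := sum_nonneg fun i _ => sq_nonneg (x i)
  have hbound := hle _ (Real.sqrt_nonneg (∑ i, x i ^ 2))
  rwa [Real.sq_sqrt hs] at hbound

end GaussianDecay

section Radial

variable {ι : Type*} [Fintype ι]

theorem radialKernel_even (K : ℝ → ℝ) : (radialKernel K : (ι → ℝ) → ℝ).Even := fun x => by
  simp only [radialKernel, Pi.neg_apply, neg_sq]

theorem radialKernel_update_neg [DecidableEq ι] (K : ℝ → ℝ) (i : ι) (x : ι → ℝ) :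
    radialKernel K (Function.update x i (-x i)) = radialKernel K x := by
  unfold radialKernel
  congr 2
  refine sum_congr rfl fun j _ => ?_
  by_cases h : j = i <;> simp [h]

theorem radialKernel_comp_perm (K : ℝ → ℝ) (σ : Equiv.Perm ι) (x : ι → ℝ) :
    radialKernel K (x ∘ σ) = radialKernel K x :=
  congrArg (fun s => K (Real.sqrt s)) (Equiv.sum_comp σ fun i => x i ^ 2)

theorem secondMomentMatrix_radialKernel_apply_ne (K : ℝ → ℝ) {i j : ι} (hij : i ≠ j) :
    secondMomentMatrix (radialKernel K) i j = 0 := by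
  classical
  have h := integral_comp_update_neg i fun x => x i * x j * radialKernel K x
  simp only [radialKernel_update_neg, Function.update_self, Function.update_of_ne hij.symm,
    neg_mul, integral_neg] at h
  simp only [secondMomentMatrix, of_apply]
  linarith

theorem secondMomentMatrix_radialKernel_diag_eq (K : ℝ → ℝ) (i j : ι) :
    secondMomentMatrix (radialKernel K) i i = secondMomentMatrix (radialKernel K) j j := by
  classical
  simpa only [secondMomentMatrix, of_apply, radialKernel_comp_perm, Function.comp_apply,
    Equiv.swap_apply_right] using
    integral_comp_perm (Equiv.swap i j) fun x => x j * x j * radialKernel K x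

theorem secondMomentMatrix_radialKernel [DecidableEq ι] {K : ℝ → ℝ}
    (hK : HasFiniteSecondMoment (radialKernel K : (ι → ℝ) → ℝ)) :
    secondMomentMatrix (radialKernel K) =
      (secondMoment (radialKernel K : (ι → ℝ) → ℝ) / Fintype.card ι) • (1 : Matrix ι ι ℝ) := by
  ext i j
  rcases eq_or_ne i j with rfl | hij
  · have : Nonempty ι := ⟨i⟩
    have htrace : (secondMomentMatrix (radialKernel K : (ι → ℝ) → ℝ)).trace =
        Fintype.card ι * secondMomentMatrix (radialKernel K) i i := by
      simp only [trace, diag_apply, secondMomentMatrix_radialKernel_diag_eq K _ i, sum_const,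
        card_univ, nsmul_eq_mul]
    rw [← hK.trace_secondMomentMatrix, htrace, Matrix.smul_apply, one_apply_eq, smul_eq_mul,
      mul_one, mul_div_cancel_left₀ _ (Nat.cast_ne_zero.2 Fintype.card_ne_zero)]
  · simp [secondMomentMatrix_radialKernel_apply_ne K hij, hij]

end Radial

theorem composed_kernel_second_order_moment_general {ι : Type*} [Fintype ι] [DecidableEq ι]
    {K₁ K₂ : ℝ → ℝ} (hK₁ : HasFiniteSecondMoment (radialKernel K₁ : (ι → ℝ) → ℝ))
    (hK₂ : HasFiniteSecondMoment (radialKernel K₂ : (ι → ℝ) → ℝ))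
    {R : Matrix ι ι ℝ} (hR : IsUnit R.det) (H : Matrix ι ι ℝ) :
    ∫ w, ∫ v, radialKernel K₁ (R *ᵥ w) * radialKernel K₂ (w - v) * (v ⬝ᵥ H *ᵥ v) =
      |R.det|⁻¹ *
        (secondMoment (radialKernel K₁ : (ι → ℝ) → ℝ) / Fintype.card ι *
            ((Rᵀ * R)⁻¹ * H).trace * (∫ x : ι → ℝ, radialKernel K₂ x) +
          secondMoment (radialKernel K₂ : (ι → ℝ) → ℝ) / Fintype.card ι *
            H.trace * ∫ x : ι → ℝ, radialKernel K₁ x) := by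
  have htrace : (R⁻¹ᵀ * H * R⁻¹).trace = ((Rᵀ * R)⁻¹ * H).trace := by
    rw [Matrix.mul_inv_rev, ← transpose_nonsing_inv, trace_mul_comm, Matrix.mul_assoc]
  rw [integral_integral_comp_mulVec_mul_dotProduct_mulVec hK₁ hK₂ (radialKernel_even K₂) hR H,
    secondMomentMatrix_radialKernel hK₁, secondMomentMatrix_radialKernel hK₂]
  simp only [Matrix.mul_smul, Matrix.mul_one, trace_smul, htrace, smul_eq_mul]

/-- Second-order moment of the composed landmark alternating diffusion
kernel.  With `K1, K2 : [0,∞) → [0,∞)` continuous, bounded by Gaussians and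
normalized so that `∫ Kᵢ(‖x‖) dx = 1`, `μ₂(Kᵢ) = ∫ ‖x‖² Kᵢ(‖x‖) dx`, and `R` an
invertible `d × d` real matrix, one has for every symmetric `d × d` real matrix `H`:
`∫∫ K1(‖Rw‖) K2(‖w−v‖) (vᵀ H v) dv dw
  = (1/|det R|) [ (μ₂(K1)/d) tr((RᵀR)⁻¹ H) + (μ₂(K2)/d) tr(H) ]`
(Euclidean norms, Lebesgue measure). -/
theorem composed_kernel_second_order_moment {d : ℕ} (hd : 1 ≤ d)
    (K1 K2 : ℝ → ℝ) (hK1c : Continuous K1) (hK2c : Continuous K2)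
    (hK1nn : ∀ t, 0 ≤ t → 0 ≤ K1 t) (hK2nn : ∀ t, 0 ≤ t → 0 ≤ K2 t)
    (c1 c2 : ℝ) (hc1 : 0 < c1) (hc2 : 0 < c2)
    (hK1b : ∀ t, 0 ≤ t → K1 t ≤ c1 * Real.exp (-c2 * t ^ 2))
    (hK2b : ∀ t, 0 ≤ t → K2 t ≤ c1 * Real.exp (-c2 * t ^ 2))
    (hK1norm : (∫ x : Fin d → ℝ, K1 (Real.sqrt (∑ i, x i ^ 2))) = 1)
    (hK2norm : (∫ x : Fin d → ℝ, K2 (Real.sqrt (∑ i, x i ^ 2))) = 1)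
    (mu2K1 mu2K2 : ℝ)
    (hmu2K1 : mu2K1 = ∫ x : Fin d → ℝ, (∑ i, x i ^ 2) * K1 (Real.sqrt (∑ i, x i ^ 2)))
    (hmu2K2 : mu2K2 = ∫ x : Fin d → ℝ, (∑ i, x i ^ 2) * K2 (Real.sqrt (∑ i, x i ^ 2)))
    (R : Matrix (Fin d) (Fin d) ℝ) (hR : IsUnit R.det)
    (H : Matrix (Fin d) (Fin d) ℝ) (hH : H.IsSymm) :
    (∫ w : Fin d → ℝ, ∫ v : Fin d → ℝ,
        K1 (Real.sqrt (∑ i, (R.mulVec w i) ^ 2))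
          * K2 (Real.sqrt (∑ i, (w i - v i) ^ 2))
          * (v ⬝ᵥ H.mulVec v))
      = |R.det|⁻¹ * (mu2K1 / d * ((Rᵀ * R)⁻¹ * H).trace + mu2K2 / d * H.trace) := by
  have hK1 : HasFiniteSecondMoment (radialKernel K1 : (Fin d → ℝ) → ℝ) :=
    hasFiniteSecondMoment_radialKernel hK1c.measurable hc2 fun t ht =>
      (abs_of_nonneg (hK1nn t ht)).trans_le (hK1b t ht)
  have hK2 : HasFiniteSecondMoment (radialKernel K2 : (Fin d → ℝ) → ℝ) :=
    hasFiniteSecondMoment_radialKernel hK2c.measurable hc2 fun t ht =>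
      (abs_of_nonneg (hK2nn t ht)).trans_le (hK2b t ht)
  simpa [radialKernel, secondMoment, hK1norm, hK2norm, ← hmu2K1, ← hmu2K2] using
    composed_kernel_second_order_moment_general hK1 hK2 hR H
end
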